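/- Let i = i(n) and j = j(n) be positive integers with i, j → ∞ and 1/2 ≤ i/j ≤ 2. Then the number C(i,j,0) of connected unicyclic bipartite graphs with labelled partition classes of sizes i and j satisfies C(i,j,0) = (1+o(1)) · √(π/8) · √(i+j) · i^{j−1/2} · j^{i−1/2}. -/

import Mathlib

open Filter Real

noncomputable section

/-- `bipGraphCount i j m` is the number of connected bipartite graphs with labelled partition
classes of sizes `i` and `j` (no edges within either class) and exactly `m` edges. -/
def bipGraphCount (i j m : ℕ) : ℕ :=
  {G : SimpleGraph (Fin i ⊕ Fin j) |
    G.Connected ∧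
    (∀ a b : Fin i, ¬ G.Adj (Sum.inl a) (Sum.inl b)) ∧
    (∀ a b : Fin j, ¬ G.Adj (Sum.inr a) (Sum.inr b)) ∧
    G.edgeSet.ncard = m}.ncard

end

/-!
A connected graph has exactly two orientations with all out-degrees one if it is unicyclic. For a
bipartite graph, such an orientation is a pair of maps `f : α → β` and `g : β → α` for which
`g ∘ f` has a cycle of at least two points, common to all orbits. For a given cycle, Burtin's lemma
counts the pairs whose orbits all run into it. The number of pairs with a cycle of `k` points is
thus a common factor times the birthday-type weight `cycleWeight i j k`. As the weight tends to
`exp (-v ^ 2 / 2)` at `k ≈ s * v`, where `s = √(i * j / (i + j))`, dominated convergence shows that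
the sum of the weights over `k` is asymptotic to `s` times a Gaussian integral.
-/

open Function

section Orbits

variable {α : Type*} {h h' : α → α} {A : Set α} {a v : α}

/-- Every forward orbit of `h` meets `A`. For `h` the parent map of a rooted structure, this says
that `h` is a forest rooted at `A`. -/
def OrbitsMeet (h : α → α) (A : Set α) : Prop :=
  ∀ x, ∃ n : ℕ, h^[n] x ∈ A

lemma orbitsMeet_iff_forall_mapsTo :
    OrbitsMeet h A ↔ ∀ T : Set α, Set.MapsTo h T T → Disjoint T A → T = ∅ := by
  constructor
  · intro hA T hT hdisj
    by_contra hne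
    obtain ⟨x, hx⟩ := Set.nonempty_iff_ne_empty.2 hne
    obtain ⟨n, hn⟩ := hA x
    exact Set.disjoint_left.1 hdisj (hT.iterate n hx) hn
  · intro hT x
    by_contra! hx
    have hempty := hT {y | ∀ n : ℕ, h^[n] y ∉ A} (fun y hy n => hy (n + 1))
      (Set.disjoint_left.2 fun y hy => hy 0)
    exact (hempty ▸ hx : x ∈ (∅ : Set α))

lemma orbitsMeet_congr (hh : Set.EqOn h h' Aᶜ) : OrbitsMeet h A ↔ OrbitsMeet h' A := by
  simp only [orbitsMeet_iff_forall_mapsTo]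
  refine forall_congr' fun T => ?_
  exact ⟨fun H hT hd => H ((hh.mono hd.subset_compl_right).mapsTo_iff.2 hT) hd,
    fun H hT hd => H ((hh.mono hd.subset_compl_right).mapsTo_iff.1 hT) hd⟩

/-- Deleting `v` from the target set amounts to short-cutting `v` in `h`. -/
lemma orbitsMeet_sdiff_singleton_iff [DecidableEq α] (hv : v ∈ A) :
    OrbitsMeet h (A \ {v}) ↔ h v ≠ v ∧ OrbitsMeet (update id v (h v) ∘ h) A := by
  have hskip : ∀ x, h x = v → (update id v (h v) ∘ h) x = h v := fun x hx => by simp [hx]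
  have hkeep : ∀ x, h x ≠ v → (update id v (h v) ∘ h) x = h x := fun x hx => by simp [hx]
  simp only [orbitsMeet_iff_forall_mapsTo]
  constructor
  · intro hA
    refine ⟨fun hfix => Set.singleton_ne_empty v (hA {v} (by simpa using hfix) (by simp)), ?_⟩
    intro T hT hdisj
    have hdisj' : Disjoint T (A \ {v}) := hdisj.mono_right Set.sdiff_subset
    by_cases hex : ∃ x ∈ T, h x = v
    · obtain ⟨x₀, hx₀, hx₀v⟩ := hex
      refine absurd (hA (insert v T) ?_ ?_) (Set.insert_nonempty v T).ne_empty
      · rintro x (rfl | hx)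
        · exact Or.inr (hskip x₀ hx₀v ▸ hT hx₀)
        · by_cases hxv : h x = v
          · exact Or.inl hxv
          · exact Or.inr (hkeep x hxv ▸ hT hx)
      · exact Set.disjoint_insert_left.2 ⟨fun hv' => hv'.2 rfl, hdisj'⟩
    · push Not at hex
      exact hA T (fun x hx => hkeep x (hex x hx) ▸ hT hx) hdisj'
  · rintro ⟨hvv, hA⟩ T hT hdisj
    have hTv : T \ {v} = ∅ := by
      refine hA _ (fun x hx => ?_) ?_
      · by_cases hxv : h x = v
        · rw [hskip x hxv]
          exact ⟨hT (hxv ▸ hT hx.1), hvv⟩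
        · rw [hkeep x hxv]
          exact ⟨hT hx.1, hxv⟩
      · exact Set.disjoint_left.2 fun x hx hxA => Set.disjoint_left.1 hdisj hx.1 ⟨hxA, hx.2⟩
    have hsub : ∀ x ∈ T, x = v := fun x hx => by
      by_contra hxv
      exact (hTv ▸ (⟨hx, hxv⟩ : x ∈ T \ {v}) : x ∈ (∅ : Set α))
    refine Set.eq_empty_of_forall_notMem fun x hx => hvv ?_
    have hvT : v ∈ T := hsub x hx ▸ hx
    exact hsub _ (hT hvT)

/-- The points that lie on every forward orbit of `h`. For finite `α` this is nonempty exactly when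
the functional graph of `h` is connected, and then it is the cycle of that graph. -/
def commonCycle (h : α → α) : Set α :=
  {a | OrbitsMeet h {a}}

lemma mapsTo_commonCycle : Set.MapsTo h (commonCycle h) (commonCycle h) := by
  intro a ha x
  obtain ⟨n, hn⟩ := ha x
  exact ⟨n + 1, by rw [iterate_succ_apply']; exact congrArg h hn⟩

lemma minimalPeriod_pos_of_mem_commonCycle (ha : a ∈ commonCycle h) : 0 < minimalPeriod h a := by
  obtain ⟨n, hn⟩ := ha (h a)
  exact minimalPeriod_pos_of_mem_periodicPts ⟨n + 1, n.succ_pos, hn⟩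

lemma two_le_ncard_commonCycle_iff [Finite α] :
    2 ≤ (commonCycle h).ncard ↔ (commonCycle h).Nonempty ∧ ∀ a, h a ≠ a := by
  constructor
  · intro hcard
    refine ⟨Set.nonempty_of_ncard_ne_zero (by omega), fun a ha => ?_⟩
    have hsub : commonCycle h ⊆ {a} := fun c hc => by
      obtain ⟨n, hn⟩ := hc a
      rwa [iterate_fixed ha, Set.mem_singleton_iff, eq_comm] at hn
    have := Set.ncard_le_ncard hsub
    rw [Set.ncard_singleton] at this
    omega
  · rintro ⟨⟨a, ha⟩, hfix⟩
    rw [← Set.ncard_pair (hfix a)]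
    exact Set.ncard_le_ncard (Set.pair_subset (mapsTo_commonCycle ha) ha)

end Orbits

section CycleParametrization

variable {α : Type*} {k : ℕ} {h : α → α} {a : α} {x x' : ZMod k ↪ α}

/-- `x` runs once around the cycle of the connected functional graph of `h`. -/
def ParametrizesCycle (h : α → α) (x : ZMod k ↪ α) : Prop :=
  (∀ t, h (x t) = x (t + 1)) ∧ OrbitsMeet h (Set.range x)

lemma ParametrizesCycle.iterate_apply (hx : ParametrizesCycle h x) (t : ZMod k) (n : ℕ) :
    h^[n] (x t) = x (t + n) := by
  induction n with
  | zero => simp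
  | succ n ih => rw [iterate_succ_apply', ih, hx.1, Nat.cast_succ, add_assoc]

variable [NeZero k]

lemma ParametrizesCycle.commonCycle_eq (hx : ParametrizesCycle h x) :
    commonCycle h = Set.range x := by
  ext a
  constructor
  · intro ha
    obtain ⟨n, hn⟩ := ha (x 0)
    exact ⟨0 + n, (hx.iterate_apply 0 n).symm.trans hn⟩
  · rintro ⟨t, rfl⟩ b
    obtain ⟨n, s, hs⟩ := hx.2 b
    refine ⟨(t - s).val + n, ?_⟩
    rw [iterate_add_apply, ← hs, hx.iterate_apply, ZMod.natCast_zmod_val, add_sub_cancel]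
    rfl

lemma ParametrizesCycle.ncard_commonCycle (hx : ParametrizesCycle h x) :
    (commonCycle h).ncard = k := by
  rw [hx.commonCycle_eq, Set.ncard_range_of_injective x.injective, Nat.card_zmod]

lemma ParametrizesCycle.ext (hx : ParametrizesCycle h x) (hx' : ParametrizesCycle h x')
    (h₀ : x 0 = x' 0) : x = x' := by
  ext t
  have hiter := hx.iterate_apply 0 t.val
  rw [h₀, hx'.iterate_apply] at hiter
  simpa using hiter.symm

lemma exists_parametrizesCycle_of_minimalPeriod_eq (ha : a ∈ commonCycle h)
    (hk : minimalPeriod h a = k) : ∃ x : ZMod k ↪ α, ParametrizesCycle h x ∧ x 0 = a := by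
  have hinj : Injective fun t : ZMod k => h^[t.val] a := fun s t hst =>
    ZMod.val_injective k <| iterate_injOn_Iio_minimalPeriod
      (hk ▸ ZMod.val_lt s) (hk ▸ ZMod.val_lt t) hst
  have hstep : ∀ t : ZMod k, h (h^[t.val] a) = h^[(t + 1).val] a := fun t => by
    rw [← iterate_succ_apply' h, ← iterate_mod_minimalPeriod_eq (n := t.val + 1), hk,
      ZMod.val_add, ZMod.val_one_eq_one_mod, Nat.add_mod_mod]
  refine ⟨⟨_, hinj⟩, ⟨hstep, fun b => ?_⟩, by simp⟩
  obtain ⟨n, hn⟩ := ha b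
  exact ⟨n, 0, by simpa using hn.symm⟩

lemma exists_parametrizesCycle (ha : a ∈ commonCycle h) (hk : (commonCycle h).ncard = k) :
    ∃ x : ZMod k ↪ α, ParametrizesCycle h x ∧ x 0 = a := by
  have : NeZero (minimalPeriod h a) := ⟨(minimalPeriod_pos_of_mem_commonCycle ha).ne'⟩
  obtain ⟨y, hy, -⟩ := exists_parametrizesCycle_of_minimalPeriod_eq ha rfl
  exact exists_parametrizesCycle_of_minimalPeriod_eq ha (hy.ncard_commonCycle.symm.trans hk)

lemma ncard_setOf_parametrizesCycle (hk : (commonCycle h).ncard = k) :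
    {x : ZMod k ↪ α | ParametrizesCycle h x}.ncard = k := by
  refine Eq.trans ?_ hk
  refine Set.ncard_congr (fun x _ => x 0) (fun x hx => ?_) (fun x x' hx hx' => hx.ext hx') ?_
  · rw [hx.commonCycle_eq]
    exact Set.mem_range_self 0
  · intro a ha
    obtain ⟨x, hx, h₀⟩ := exists_parametrizesCycle ha hk
    exact ⟨x, hx, h₀⟩

end CycleParametrization

open Finset

section PrescribedValues

variable {ι α β : Type*} [Fintype ι] [Fintype α] [Fintype β]

open Classical in
lemma card_filter_comp_eq_mul_pow {P : (α → β) → Prop} [DecidablePred P] (x : ι ↪ α)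
    (y : ι → β) (hP : ∀ f f' : α → β, Set.EqOn f f' (Set.range x)ᶜ → (P f ↔ P f')) :
    #{f : α → β | f ∘ x = y ∧ P f} * Fintype.card β ^ Fintype.card ι = #{f | P f} := by
  have hextend : ∀ (u : ι → β) (f : α → β), Set.EqOn (extend x u f) f (Set.range x)ᶜ :=
    fun u f a ha => extend_apply' u f a (by simpa using ha)
  have hcomp : ∀ (u : ι → β) (f : α → β), extend x u f ∘ x = u :=
    fun u f => extend_comp x.injective u f
  have hself : ∀ (u : ι → β) (f : α → β), extend x (f ∘ x) (extend x u f) = f := by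
    intro u f
    funext a
    by_cases ha : a ∈ Set.range x
    · obtain ⟨t, rfl⟩ := ha
      rw [x.injective.extend_apply, comp_apply]
    · rw [hextend _ _ ha, hextend _ _ ha]
  rw [← Fintype.card_fun, ← card_univ, ← card_product]
  refine card_nbij' (fun q => extend x q.2 q.1) (fun f => (extend x y f, f ∘ x)) ?_ ?_ ?_ ?_
  · rintro ⟨f, u⟩ hf
    simp only [coe_product, coe_filter, mem_univ, true_and, coe_univ, Set.mem_prod,
      Set.mem_ofPred_eq, Set.mem_univ, and_true] at hf ⊢
    exact (hP _ _ (hextend u f)).2 hf.2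
  · intro f hf
    simp only [coe_product, coe_filter, mem_univ, true_and, coe_univ, Set.mem_prod,
      Set.mem_ofPred_eq, Set.mem_univ, and_true] at hf ⊢
    exact ⟨hcomp y f, (hP _ _ (hextend y f)).2 hf⟩
  · rintro ⟨f, u⟩ hf
    simp only [coe_product, coe_filter, mem_univ, true_and, coe_univ, Set.mem_prod,
      Set.mem_ofPred_eq, Set.mem_univ, and_true] at hf
    ext1
    · rw [← hf.1]
      exact hself u f
    · exact hcomp u f
  · exact fun f _ => hself y f

open Classical in
lemma card_filter_apply_eq_mul {P : (α → β) → Prop} [DecidablePred P] (v : α) (w : β)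
    (hP : ∀ f f' : α → β, Set.EqOn f f' {v}ᶜ → (P f ↔ P f')) :
    #{f : α → β | f v = w ∧ P f} * Fintype.card β = #{f | P f} := by
  have hcount := card_filter_comp_eq_mul_pow (P := P)
    ⟨fun _ : Unit => v, injective_of_subsingleton _⟩ (fun _ => w) (by simpa using hP)
  simpa [funext_iff] using hcount

open Classical in
lemma card_filter_apply_mem_mul (v : α) (B : Finset β) :
    #{f : α → β | f v ∈ B} * Fintype.card β = #B * Fintype.card β ^ Fintype.card α := by
  rw [card_eq_sum_card_fiberwise (f := fun f => f v) (t := B) fun f hf => by simpa using hf,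
    sum_mul, sum_const_nat]
  intro w hw
  have hcount := card_filter_apply_eq_mul (P := fun _ : α → β => True) v w (fun _ _ _ => Iff.rfl)
  simp only [and_true, filter_true, card_univ, Fintype.card_fun] at hcount
  rw [← hcount, filter_filter]
  congr 3 with f
  grind

end PrescribedValues

section Burtin

variable {N W : Type*} [Fintype W]

open Classical in
lemma sum_card_filter_update_notMem {S : Finset N} {v : N} (o : W → N) :
    ∑ w with o w ≠ v, #{w' | update id v (o w) (o w') ∉ S} =
      Fintype.card W * #{w | o w ∉ insert v S} := by
  have hfiber : ∀ w, #{w' | update id v (o w) (o w') ∉ S} =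
      #{w' | o w' ∉ insert v S} + if o w ∉ S then #{w' | o w' = v} else 0 := by
    intro w
    rw [← card_filter_add_card_filter_not (fun w' => o w' ≠ v), filter_filter, filter_filter]
    congr 1
    · exact congrArg card (filter_congr fun w' _ => by grind [update_apply])
    · by_cases hw : o w ∈ S
      · simp only [hw, not_true_eq_false, if_false, card_eq_zero, filter_eq_empty_iff]
        grind [update_apply]
      · simp only [hw, not_false_eq_true, if_true]
        exact congrArg card (filter_congr fun w' _ => by grind [update_apply])
  simp only [hfiber, sum_add_distrib, sum_const, smul_eq_mul, ← sum_filter, filter_filter]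
  have hgood : #{w | o w ≠ v ∧ o w ∉ S} = #{w | o w ∉ insert v S} :=
    congrArg card (filter_congr fun w _ => by simp)
  rw [hgood, ← card_univ, ← card_filter_add_card_filter_not (s := univ) (fun w => o w ≠ v)]
  simp only [not_not]
  ring

open Classical in
/-- Burtin's lemma on random mappings. -/
lemma card_filter_orbitsMeet_compl_mul [Fintype N] (o : W → N) (S : Finset N) :
    #{f : N → W | OrbitsMeet (o ∘ f) (↑S)ᶜ} * Fintype.card W =
      Fintype.card W ^ Fintype.card N * #{w | o w ∉ S} := by
  induction S using Finset.induction_on generalizing o with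
  | empty => simp [show ∀ h : N → N, OrbitsMeet h Set.univ from fun _ _ => ⟨0, trivial⟩]
  | insert v S hv ih =>
    rcases Nat.eq_zero_or_pos (Fintype.card W) with hW | hW
    · have : IsEmpty W := Fintype.card_eq_zero_iff.1 hW
      simp
    have hshort : ∀ f : N → W, OrbitsMeet (o ∘ f) (↑(insert v S))ᶜ ↔
        o (f v) ≠ v ∧ OrbitsMeet ((update id v (o (f v)) ∘ o) ∘ f) (↑S)ᶜ := by
      intro f
      have hset : ((↑(insert v S) : Set N))ᶜ = (↑S)ᶜ \ {v} := by
        ext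
        simp [and_comm]
      rw [hset, orbitsMeet_sdiff_singleton_iff (by simpa using hv)]
      rfl
    have hfiber : ∀ w ∈ ({w | o w ≠ v} : Finset W),
        #{f ∈ {f : N → W | OrbitsMeet (o ∘ f) (↑(insert v S))ᶜ} | f v = w} * Fintype.card W =
          #{f : N → W | OrbitsMeet ((update id v (o w) ∘ o) ∘ f) (↑S)ᶜ} := by
      intro w hw
      rw [← card_filter_apply_eq_mul v w, filter_filter]
      · congr 3 with f
        rw [hshort]
        grind
      · refine fun f f' hf => orbitsMeet_congr fun u hu => ?_
        have huv : u ≠ v := fun h => hv (by simpa [h] using hu)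
        simp [hf huv]
    refine Nat.eq_of_mul_eq_mul_right hW ?_
    rw [card_eq_sum_card_fiberwise (f := fun f => f v) (t := ({w | o w ≠ v} : Finset W))
      fun f hf => by simpa using ((hshort f).1 (by simpa using hf)).1,
      sum_mul, sum_congr rfl hfiber, sum_mul, sum_congr rfl fun w _ => ih _, ← mul_sum]
    simp only [comp_apply]
    rw [sum_card_filter_update_notMem o]
    ring

end Burtin

section PairCount

variable {ι α β : Type*} [Fintype ι] [Fintype α] [Fintype β] {k : ℕ} [NeZero k]

open Classical in
lemma card_filter_comp_eq_and_orbitsMeet_mul (x : ι ↪ α) (y : ι → β) (g : β → α) :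
    #{f : α → β | f ∘ x = y ∧ OrbitsMeet (g ∘ f) (Set.range x)} *
        Fintype.card β ^ Fintype.card ι * Fintype.card β =
      Fintype.card β ^ Fintype.card α * #{w | g w ∈ univ.map x} := by
  have hrange : ((↑(univ.map x)ᶜ : Set α))ᶜ = Set.range x := by simp
  rw [card_filter_comp_eq_mul_pow]
  · have hburtin := card_filter_orbitsMeet_compl_mul g (univ.map x)ᶜ
    rw [hrange] at hburtin
    rw [hburtin]
    simp
  · exact fun f f' hf => orbitsMeet_congr fun a ha => congrArg g (hf ha)

open Classical in
lemma sum_card_filter_apply_mem_mul (x : ι ↪ α) (y : ι ↪ β) (σ : ι → ι) :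
    (∑ g : β → α with g ∘ y = x ∘ σ, #{w | g w ∈ univ.map x}) *
        Fintype.card α ^ Fintype.card ι * Fintype.card α =
      Fintype.card α ^ Fintype.card β * (Fintype.card ι *
        (Fintype.card α + (Fintype.card β - Fintype.card ι))) := by
  have hmem : ∀ w ∈ univ.map y,
      #{g : β → α | g ∘ y = x ∘ σ ∧ g w ∈ univ.map x} * Fintype.card α ^ Fintype.card ι =
        Fintype.card α ^ Fintype.card β := by
    intro w hw
    obtain ⟨t, -, rfl⟩ := mem_map.1 hw
    have hcount := card_filter_comp_eq_mul_pow (P := fun _ : β → α => True) y (x ∘ σ)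
      fun _ _ _ => Iff.rfl
    simp only [and_true, filter_true, card_univ, Fintype.card_fun] at hcount
    rw [← hcount]
    congr 2
    refine filter_congr fun g _ => and_iff_left_of_imp fun hg => ?_
    exact mem_map.2 ⟨σ t, mem_univ _, (congrFun hg t).symm⟩
  have hnotMem : ∀ w ∈ (univ.map y)ᶜ,
      #{g : β → α | g ∘ y = x ∘ σ ∧ g w ∈ univ.map x} * Fintype.card α ^ Fintype.card ι *
          Fintype.card α = Fintype.card ι * Fintype.card α ^ Fintype.card β := by
    intro w hw
    rw [card_filter_comp_eq_mul_pow y (P := fun g : β → α => g w ∈ univ.map x),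
      card_filter_apply_mem_mul, card_map, card_univ]
    exact fun g g' hg => by rw [hg (by simpa using hw)]
  have hswap : ∑ g : β → α with g ∘ y = x ∘ σ, #{w | g w ∈ univ.map x} =
      ∑ w, #{g : β → α | g ∘ y = x ∘ σ ∧ g w ∈ univ.map x} := by
    simp_rw [← filter_filter]
    exact sum_card_bipartiteAbove_eq_sum_card_bipartiteBelow
      fun (g : β → α) w => g w ∈ univ.map x
  rw [hswap, sum_mul, sum_mul, ← sum_add_sum_compl (univ.map y),
    sum_congr rfl fun w hw => by rw [hmem w hw], sum_congr rfl hnotMem, sum_const, sum_const,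
    card_compl, card_map, card_univ, smul_eq_mul, smul_eq_mul]
  ring

open Classical in
lemma card_filter_pair_comp_eq_mul (x : ι ↪ α) (y : ι ↪ β) (σ : ι → ι) :
    #{p : (α → β) × (β → α) |
          p.1 ∘ x = y ∧ p.2 ∘ y = x ∘ σ ∧ OrbitsMeet (p.2 ∘ p.1) (Set.range x)} *
        (Fintype.card α * Fintype.card β) ^ (Fintype.card ι + 1) =
      Fintype.card β ^ Fintype.card α * Fintype.card α ^ Fintype.card β * (Fintype.card ι *
        (Fintype.card α + (Fintype.card β - Fintype.card ι))) := by
  have hfiber : ∀ g ∈ ({g | g ∘ y = x ∘ σ} : Finset (β → α)),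
      #{p ∈ {p : (α → β) × (β → α) |
          p.1 ∘ x = y ∧ p.2 ∘ y = x ∘ σ ∧ OrbitsMeet (p.2 ∘ p.1) (Set.range x)} | p.2 = g} =
        #{f : α → β | f ∘ x = y ∧ OrbitsMeet (g ∘ f) (Set.range x)} := by
    intro g hg
    refine card_nbij' Prod.fst (fun f => (f, g)) ?_ ?_ ?_ ?_
    all_goals intro; grind
  rw [card_eq_sum_card_fiberwise (f := Prod.snd) (t := ({g | g ∘ y = x ∘ σ} : Finset (β → α)))
    fun p hp => by grind, sum_congr rfl hfiber]
  calc _ = (∑ g : β → α with g ∘ y = x ∘ σ,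
          #{f : α → β | f ∘ x = y ∧ OrbitsMeet (g ∘ f) (Set.range x)} *
            Fintype.card β ^ Fintype.card ι * Fintype.card β) *
          Fintype.card α ^ Fintype.card ι * Fintype.card α := by
        rw [← sum_mul, ← sum_mul]
        ring
    _ = _ := by
        simp_rw [card_filter_comp_eq_and_orbitsMeet_mul]
        rw [← mul_sum, mul_assoc, mul_assoc, ← mul_assoc (∑ _ ∈ _, _),
          sum_card_filter_apply_mem_mul]
        ring

open Classical in
lemma card_filter_parametrizesCycle_mul (x : ZMod k ↪ α) :
    #{p : (α → β) × (β → α) | ParametrizesCycle (p.2 ∘ p.1) x} *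
        (Fintype.card α * Fintype.card β) ^ (k + 1) =
      (Fintype.card β).descFactorial k *
        (Fintype.card β ^ Fintype.card α * Fintype.card α ^ Fintype.card β * (k *
          (Fintype.card α + (Fintype.card β - k)))) := by
  have hunion : ({p | ParametrizesCycle (p.2 ∘ p.1) x} : Finset ((α → β) × (β → α))) =
      univ.biUnion fun y : ZMod k ↪ β => {p | p.1 ∘ x = y ∧ p.2 ∘ y = x ∘ (· + 1) ∧
        OrbitsMeet (p.2 ∘ p.1) (Set.range x)} := by
    ext p
    simp only [mem_filter_univ, mem_biUnion, mem_univ, true_and]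
    constructor
    · rintro ⟨hstep, hmeet⟩
      have hinj : Injective (p.1 ∘ x) := by
        refine Injective.of_comp (f := p.2) ?_
        rw [show p.2 ∘ p.1 ∘ x = x ∘ (· + 1) from funext hstep]
        exact x.injective.comp (add_left_injective 1)
      exact ⟨⟨_, hinj⟩, rfl, funext hstep, hmeet⟩
    · rintro ⟨y, hxy, hyx, hmeet⟩
      exact ⟨fun t => (congrArg p.2 (congrFun hxy t)).trans (congrFun hyx t), hmeet⟩
  rw [hunion, card_biUnion, sum_mul]
  · have hsum := fun y : ZMod k ↪ β => card_filter_pair_comp_eq_mul x y (· + 1)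
    simp only [ZMod.card] at hsum
    simp [hsum, Fintype.card_embedding_eq]
  · intro y _ y' _ hne
    refine disjoint_filter.2 fun p _ hp hp' => hne (DFunLike.coe_injective ?_)
    rw [← hp.1, hp'.1]

open Classical in
lemma card_filter_ncard_commonCycle_eq_mul :
    #{p : (α → β) × (β → α) | (commonCycle (p.2 ∘ p.1)).ncard = k} *
        (Fintype.card α * Fintype.card β) ^ (k + 1) =
      Fintype.card β ^ Fintype.card α * Fintype.card α ^ Fintype.card β *
        ((Fintype.card α).descFactorial k * (Fintype.card β).descFactorial k *
          (Fintype.card α + (Fintype.card β - k))) := by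
  have habove : ∀ p : (α → β) × (β → α), #{x : ZMod k ↪ α | ParametrizesCycle (p.2 ∘ p.1) x} =
      if (commonCycle (p.2 ∘ p.1)).ncard = k then k else 0 := by
    intro p
    split_ifs with hp
    · refine Eq.trans ?_ (ncard_setOf_parametrizesCycle hp)
      rw [Set.ncard_eq_toFinset_card', Set.toFinset_ofPred]
    · exact card_eq_zero.2 (filter_eq_empty_iff.2 fun x _ hx => hp hx.ncard_commonCycle)
  have hdouble : #{p : (α → β) × (β → α) | (commonCycle (p.2 ∘ p.1)).ncard = k} * k =
      ∑ x : ZMod k ↪ α, #{p : (α → β) × (β → α) | ParametrizesCycle (p.2 ∘ p.1) x} := by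
    rw [← smul_eq_mul, ← sum_const, sum_filter]
    simp_rw [← habove]
    exact sum_card_bipartiteAbove_eq_sum_card_bipartiteBelow
      fun (p : (α → β) × (β → α)) x => ParametrizesCycle (p.2 ∘ p.1) x
  refine Nat.eq_of_mul_eq_mul_right (NeZero.pos k) ?_
  rw [mul_right_comm, hdouble, sum_mul]
  simp_rw [card_filter_parametrizesCycle_mul]
  simp only [sum_const, card_univ, Fintype.card_embedding_eq, ZMod.card, smul_eq_mul]
  ring

end PairCount

section FunctionalGraph

variable {V : Type*} {h h' : V → V} {G : SimpleGraph V} {u v w : V}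

/-- The graph joining every point to its image under `h`. When `h ∘ h` has no fixed point, `h` is an
orientation of this graph with all out-degrees equal to one. -/
def functionalGraph (h : V → V) : SimpleGraph V :=
  SimpleGraph.fromRel fun v w => h v = w

lemma functionalGraph_adj : (functionalGraph h).Adj v w ↔ v ≠ w ∧ (h v = w ∨ h w = v) :=
  SimpleGraph.fromRel_adj _ _ _

lemma ne_apply_of_apply_apply_ne (hh : ∀ v, h (h v) ≠ v) (v : V) : v ≠ h v :=
  fun hv => hh v (by rw [← hv, ← hv])

lemma ncard_edgeSet_functionalGraph (hh : ∀ v, h (h v) ≠ v) :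
    (functionalGraph h).edgeSet.ncard = Nat.card V := by
  have hrange : (functionalGraph h).edgeSet = Set.range fun v => s(v, h v) := by
    ext e
    induction e with
    | _ v w =>
      simp only [SimpleGraph.mem_edgeSet, functionalGraph_adj, Set.mem_range, Sym2.eq_iff]
      constructor
      · rintro ⟨-, hvw | hwv⟩
        · exact ⟨v, Or.inl ⟨rfl, hvw⟩⟩
        · exact ⟨w, Or.inr ⟨rfl, hwv⟩⟩
      · rintro ⟨z, ⟨rfl, rfl⟩ | ⟨rfl, rfl⟩⟩
        · exact ⟨ne_apply_of_apply_apply_ne hh z, Or.inl rfl⟩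
        · exact ⟨(ne_apply_of_apply_apply_ne hh z).symm, Or.inr rfl⟩
  rw [hrange, Set.ncard_range_of_injective]
  intro v w hvw
  rcases Sym2.eq_iff.1 hvw with ⟨hv, -⟩ | ⟨hv, hw⟩
  · exact hv
  · exact (hh _ ((congrArg h hw).trans hv.symm)).elim

lemma functionalGraph_eq_of_forall_adj [Finite V] (hh : ∀ v, h (h v) ≠ v)
    (hadj : ∀ v, G.Adj v (h v)) (hcard : G.edgeSet.ncard = Nat.card V) :
    functionalGraph h = G := by
  have hle : functionalGraph h ≤ G := by
    intro v w hvw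
    rcases (functionalGraph_adj.1 hvw).2 with rfl | rfl
    · exact hadj v
    · exact (hadj w).symm
  refine SimpleGraph.edgeSet_inj.1 ?_
  refine Set.eq_of_subset_of_ncard_le (SimpleGraph.edgeSet_subset_edgeSet.2 hle) ?_ (Set.toFinite _)
  rw [hcard, ncard_edgeSet_functionalGraph hh]

lemma exists_apply_adj_and_dist_succ_eq (hG : G.Connected) (r : V) :
    ∃ p : V → V, ∀ v ≠ r, G.Adj v (p v) ∧ G.dist (p v) r + 1 = G.dist v r := by
  have hparent : ∀ v, ∃ w, v ≠ r → G.Adj v w ∧ G.dist w r + 1 = G.dist v r := by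
    intro v
    obtain ⟨walk, hwalk⟩ := hG.exists_walk_length_eq_dist v r
    cases walk with
    | nil => exact ⟨r, fun hv => absurd rfl hv⟩
    | @cons _ w _ hvw tail =>
      refine ⟨w, fun _ => ⟨hvw, le_antisymm ?_ ?_⟩⟩
      · rw [← hwalk, SimpleGraph.Walk.length_cons]
        exact Nat.succ_le_succ (SimpleGraph.dist_le tail)
      · have htriangle := hG.dist_triangle (u := v) (v := w) (w := r)
        rw [SimpleGraph.dist_eq_one_iff_adj.2 hvw] at htriangle
        omega
  choose p hp using hparent
  exact ⟨p, hp⟩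

lemma orbitsMeet_singleton_of_forall_lt (d : V → ℕ) (hd : ∀ v ≠ u, d (h v) < d v) :
    OrbitsMeet h {u} := by
  refine orbitsMeet_iff_forall_mapsTo.2 fun T hT hdisj => Set.not_nonempty_iff_eq_empty.1 ?_
  intro hne
  have hmin := hd _ (Set.disjoint_right.1 hdisj.symm (argminOn_mem d T hne))
  exact not_lt_argminOn d T (hT (argminOn_mem d T hne)) hmin

lemma exists_functionalGraph_eq_of_connected_deleteEdges [Finite V]
    (hcard : G.edgeSet.ncard = Nat.card V) (huv : G.Adj u v)
    (hT : (G.deleteEdges {s(u, v)}).Connected) :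
    ∃ h : V → V, (∀ w, h (h w) ≠ w) ∧ functionalGraph h = G ∧ h u = v ∧ OrbitsMeet h {u} := by
  classical
  obtain ⟨p, hp⟩ := exists_apply_adj_and_dist_succ_eq hT u
  have hpv : p v ≠ u := fun hpv => by
    have hadj := (hp v huv.ne').1
    rw [hpv, SimpleGraph.deleteEdges_adj] at hadj
    exact hadj.2 Sym2.eq_swap
  have hne : ∀ w, update p u v (update p u v w) ≠ w := by
    intro w
    by_cases hwu : w = u
    · rwa [hwu, update_self, update_of_ne huv.ne']
    rw [update_of_ne hwu]
    by_cases hpw : p w = u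
    · rw [hpw, update_self]
      rintro rfl
      exact hpv hpw
    · rw [update_of_ne hpw]
      intro hloop
      have hdist := (hp _ hpw).2
      rw [hloop, ← (hp w hwu).2] at hdist
      omega
  refine ⟨update p u v, hne, functionalGraph_eq_of_forall_adj hne (fun w => ?_) hcard,
    update_self .., orbitsMeet_singleton_of_forall_lt
      ((G.deleteEdges {s(u, v)}).dist · u) fun w hwu => ?_⟩
  · by_cases hwu : w = u
    · rwa [hwu, update_self]
    · rw [update_of_ne hwu]
      exact SimpleGraph.deleteEdges_le _ (hp w hwu).1
  · rw [update_of_ne hwu, ← (hp w hwu).2]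
    exact Nat.lt_succ_self _

/-- The points at which two orientations of the same graph differ are closed under each of them. -/
lemma eq_of_functionalGraph_eq (hh : ∀ v, h (h v) ≠ v)
    (hGraph : functionalGraph h = functionalGraph h') (hmeet : OrbitsMeet h {u})
    (hu : h u = h' u) : h = h' := by
  have hempty : {v | h v ≠ h' v} = ∅ := by
    refine orbitsMeet_iff_forall_mapsTo.1 hmeet _ (fun v hv => ?_) (by simpa using hu)
    have hadj : (functionalGraph h').Adj v (h v) :=
      hGraph ▸ functionalGraph_adj.2 ⟨ne_apply_of_apply_apply_ne hh v, Or.inl rfl⟩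
    rcases (functionalGraph_adj.1 hadj).2 with heq | hback
    · exact absurd heq.symm hv
    · exact fun heq => hh v (heq.trans hback)
  funext v
  by_contra hv
  exact (hempty ▸ hv : v ∈ (∅ : Set V))

lemma exists_adj_connected_deleteEdges [Finite V] (hG : G.Connected)
    (hcard : G.edgeSet.ncard = Nat.card V) :
    ∃ u v, G.Adj u v ∧ (G.deleteEdges {s(u, v)}).Connected := by
  have hcyc : ¬ G.IsAcyclic := by
    intro hacyc
    have htree := (SimpleGraph.isTree_iff_connected_and_card.1 ⟨hG, hacyc⟩).2
    rw [Nat.card_coe_set_eq, hcard] at htree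
    omega
  rw [SimpleGraph.isAcyclic_iff_forall_adj_isBridge] at hcyc
  push Not at hcyc
  obtain ⟨u, v, huv, hbridge⟩ := hcyc
  exact ⟨u, v, huv, hG.connected_delete_edge_of_not_isBridge hbridge⟩

lemma ncard_setOf_functionalGraph_eq [Finite V] (hG : G.Connected)
    (hcard : G.edgeSet.ncard = Nat.card V) :
    {h : V → V | (∀ v, h (h v) ≠ v) ∧ functionalGraph h = G}.ncard = 2 := by
  obtain ⟨u, v, huv, hT⟩ := exists_adj_connected_deleteEdges hG hcard
  obtain ⟨h₀, hne₀, hgraph₀, hu₀, hmeet₀⟩ :=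
    exists_functionalGraph_eq_of_connected_deleteEdges hcard huv hT
  obtain ⟨h₁, hne₁, hgraph₁, hv₁, hmeet₁⟩ :=
    exists_functionalGraph_eq_of_connected_deleteEdges hcard huv.symm (Sym2.eq_swap ▸ hT)
  refine Set.ncard_eq_two.2 ⟨h₀, h₁, fun heq => hne₀ u (by rw [hu₀, heq, hv₁]), ?_⟩
  ext h
  constructor
  · rintro ⟨-, hgraph⟩
    rcases (functionalGraph_adj.1 (hgraph ▸ huv)).2 with hu | hv
    · exact Or.inl (eq_of_functionalGraph_eq hne₀ (hgraph₀.trans hgraph.symm) hmeet₀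
        (hu₀.trans hu.symm)).symm
    · exact Or.inr (eq_of_functionalGraph_eq hne₁ (hgraph₁.trans hgraph.symm) hmeet₁
        (hv₁.trans hv.symm)).symm
  · rintro (rfl | rfl)
    · exact ⟨hne₀, hgraph₀⟩
    · exact ⟨hne₁, hgraph₁⟩

lemma functionalGraph_reachable_iterate (v : V) (n : ℕ) :
    (functionalGraph h).Reachable v (h^[n] v) := by
  induction n with
  | zero => rfl
  | succ n ih =>
    rw [iterate_succ_apply']
    by_cases hfix : h^[n] v = h (h^[n] v)
    · rwa [← hfix]
    · exact ih.trans (functionalGraph_adj.2 ⟨hfix, Or.inl rfl⟩).reachable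

lemma periodicPts_nonempty [Finite V] [Nonempty V] (h : V → V) : (periodicPts h).Nonempty := by
  obtain ⟨v⟩ := ‹Nonempty V›
  obtain ⟨m, n, hmn, heq⟩ := Finite.exists_ne_map_eq_of_infinite fun n => h^[n] v
  wlog hlt : m < n generalizing m n
  · exact this n m hmn.symm heq.symm (by omega)
  refine ⟨h^[m] v, n - m, by omega, ?_⟩
  rw [IsPeriodicPt, IsFixedPt, ← iterate_add_apply, Nat.sub_add_cancel hlt.le]
  exact heq.symm

lemma mem_commonCycle_of_connected (hconn : (functionalGraph h).Connected)
    (hv : v ∈ periodicPts h) : v ∈ commonCycle h := by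
  obtain ⟨m, hm, hperiod⟩ := hv
  intro w
  induction (SimpleGraph.reachable_iff_reflTransGen v w).1 (hconn v w) with
  | refl => exact ⟨0, rfl⟩
  | @tail y _ _ hadj ih =>
    obtain ⟨n, hn⟩ := ih
    rcases (functionalGraph_adj.1 hadj).2 with rfl | rfl
    · cases n with
      | zero =>
        obtain rfl : y = v := hn
        refine ⟨m - 1, ?_⟩
        rw [← iterate_succ_apply, Nat.succ_eq_add_one, Nat.sub_add_cancel hm]
        exact hperiod
      | succ n => exact ⟨n, hn⟩
    · exact ⟨n + 1, hn⟩

lemma functionalGraph_connected_iff [Finite V] [Nonempty V] :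
    (functionalGraph h).Connected ↔ (commonCycle h).Nonempty := by
  constructor
  · intro hconn
    obtain ⟨v, hv⟩ := periodicPts_nonempty h
    exact ⟨v, mem_commonCycle_of_connected hconn hv⟩
  · rintro ⟨a, ha⟩
    have hreach : ∀ v, (functionalGraph h).Reachable v a := fun v => by
      obtain ⟨n, hn⟩ := ha v
      rw [← Set.mem_singleton_iff.1 hn]
      exact functionalGraph_reachable_iterate v n
    exact SimpleGraph.Connected.mk fun v w => (hreach v).trans (hreach w).symm

end FunctionalGraph

section Bipartite

variable {α β : Type*} {p : (α → β) × (β → α)}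

/-- The connected unicyclic bipartite graphs with classes `α` and `β`. For a connected graph,
unicyclic means having as many edges as vertices. -/
def unicyclicBipartiteGraphs (α β : Type*) : Set (SimpleGraph (α ⊕ β)) :=
  {G | G.Connected ∧ (∀ a b : α, ¬ G.Adj (Sum.inl a) (Sum.inl b)) ∧
    (∀ a b : β, ¬ G.Adj (Sum.inr a) (Sum.inr b)) ∧ G.edgeSet.ncard = Nat.card (α ⊕ β)}

lemma bipGraphCount_add_eq_ncard (i j : ℕ) :
    bipGraphCount i j (i + j) = (unicyclicBipartiteGraphs (Fin i) (Fin j)).ncard := by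
  simp [bipGraphCount, unicyclicBipartiteGraphs]

/-- The self-map of the disjoint union `α ⊕ β` given by a pair of maps `α → β` and `β → α`. -/
def sideSwap (p : (α → β) × (β → α)) : α ⊕ β → α ⊕ β :=
  Sum.elim (Sum.inr ∘ p.1) (Sum.inl ∘ p.2)

lemma sideSwap_injective : Injective (sideSwap : (α → β) × (β → α) → α ⊕ β → α ⊕ β) := by
  intro p q hpq
  ext x
  · exact Sum.inr_injective (congrFun hpq (Sum.inl x))
  · exact Sum.inl_injective (congrFun hpq (Sum.inr x))

lemma sideSwap_sideSwap_ne_iff :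
    (∀ v, sideSwap p (sideSwap p v) ≠ v) ↔ ∀ a, (p.2 ∘ p.1) a ≠ a := by
  constructor
  · exact fun hne a ha => hne (Sum.inl a) (congrArg Sum.inl ha)
  · rintro hne (a | b) hv
    · exact hne a (Sum.inl_injective hv)
    · exact hne (p.2 b) (congrArg p.2 (Sum.inr_injective hv))

lemma inl_mem_commonCycle_sideSwap_iff {a : α} :
    Sum.inl a ∈ commonCycle (sideSwap p) ↔ a ∈ commonCycle (p.2 ∘ p.1) := by
  constructor
  · intro ha
    refine orbitsMeet_iff_forall_mapsTo.2 fun T hT hdisj => ?_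
    have hempty := orbitsMeet_iff_forall_mapsTo.1 ha (Sum.inl '' T ∪ Sum.inr '' (p.1 '' T)) ?_ ?_
    · exact Set.image_eq_empty.1 (Set.union_empty_iff.1 hempty).1
    · rintro _ (⟨x, hx, rfl⟩ | ⟨_, ⟨x, hx, rfl⟩, rfl⟩)
      · exact Or.inr ⟨_, ⟨x, hx, rfl⟩, rfl⟩
      · exact Or.inl ⟨_, hT hx, rfl⟩
    · simpa using hdisj
  · intro ha
    have hsemi : Semiconj Sum.inl (p.2 ∘ p.1) (sideSwap p)^[2] := fun _ => rfl
    have hleft : ∀ x, ∃ n, (sideSwap p)^[n] (Sum.inl x) = Sum.inl a := fun x => by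
      obtain ⟨n, hn⟩ := ha x
      exact ⟨2 * n, by rw [iterate_mul, ← (hsemi.iterate_right n).eq, Set.mem_singleton_iff.1 hn]⟩
    rintro (x | y)
    · exact hleft x
    · obtain ⟨n, hn⟩ := hleft (p.2 y)
      exact ⟨n + 1, hn⟩

lemma commonCycle_sideSwap_nonempty_iff :
    (commonCycle (sideSwap p)).Nonempty ↔ (commonCycle (p.2 ∘ p.1)).Nonempty := by
  constructor
  · rintro ⟨a | b, hc⟩
    · exact ⟨a, inl_mem_commonCycle_sideSwap_iff.1 hc⟩
    · exact ⟨p.2 b, inl_mem_commonCycle_sideSwap_iff.1 (mapsTo_commonCycle hc)⟩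
  · rintro ⟨a, ha⟩
    exact ⟨Sum.inl a, inl_mem_commonCycle_sideSwap_iff.2 ha⟩

variable [Finite α] [Finite β] [Nonempty α]

lemma two_le_ncard_commonCycle_comp_iff :
    2 ≤ (commonCycle (p.2 ∘ p.1)).ncard ↔
      (∀ v, sideSwap p (sideSwap p v) ≠ v) ∧ (functionalGraph (sideSwap p)).Connected := by
  rw [two_le_ncard_commonCycle_iff, sideSwap_sideSwap_ne_iff, functionalGraph_connected_iff,
    commonCycle_sideSwap_nonempty_iff, and_comm]

lemma functionalGraph_sideSwap_mem (hp : 2 ≤ (commonCycle (p.2 ∘ p.1)).ncard) :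
    functionalGraph (sideSwap p) ∈ unicyclicBipartiteGraphs α β := by
  obtain ⟨hne, hconn⟩ := two_le_ncard_commonCycle_comp_iff.1 hp
  refine ⟨hconn, ?_, ?_, ncard_edgeSet_functionalGraph hne⟩
  all_goals simp [functionalGraph_adj, sideSwap]

lemma image_sideSwap_setOf_functionalGraph_eq {G : SimpleGraph (α ⊕ β)}
    (hG : G ∈ unicyclicBipartiteGraphs α β) :
    sideSwap '' {p | 2 ≤ (commonCycle (p.2 ∘ p.1)).ncard ∧ functionalGraph (sideSwap p) = G} =
      {h | (∀ v, h (h v) ≠ v) ∧ functionalGraph h = G} := by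
  obtain ⟨hconn, hl, hr, -⟩ := hG
  ext h
  constructor
  · rintro ⟨p, ⟨hp, hgraph⟩, rfl⟩
    exact ⟨(two_le_ncard_commonCycle_comp_iff.1 hp).1, hgraph⟩
  · rintro ⟨hne, rfl⟩
    have hadj : ∀ v, (functionalGraph h).Adj v (h v) := fun v =>
      functionalGraph_adj.2 ⟨ne_apply_of_apply_apply_ne hne v, Or.inl rfl⟩
    have hf : ∀ a, ∃ b, h (Sum.inl a) = Sum.inr b := fun a => by
      rcases hv : h (Sum.inl a) with a' | b
      · exact absurd (hv ▸ hadj (Sum.inl a)) (hl a a')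
      · exact ⟨b, rfl⟩
    have hg : ∀ b, ∃ a, h (Sum.inr b) = Sum.inl a := fun b => by
      rcases hv : h (Sum.inr b) with a | b'
      · exact ⟨a, rfl⟩
      · exact absurd (hv ▸ hadj (Sum.inr b)) (hr b b')
    choose f hf using hf
    choose g hg using hg
    obtain rfl : sideSwap (f, g) = h := by
      funext v
      rcases v with a | b
      · exact (hf a).symm
      · exact (hg b).symm
    exact ⟨(f, g), ⟨two_le_ncard_commonCycle_comp_iff.2 ⟨hne, hconn⟩, rfl⟩, rfl⟩

lemma two_mul_ncard_unicyclicBipartiteGraphs :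
    2 * (unicyclicBipartiteGraphs α β).ncard =
      {p : (α → β) × (β → α) | 2 ≤ (commonCycle (p.2 ∘ p.1)).ncard}.ncard := by
  classical
  have := Fintype.ofFinite (SimpleGraph (α ⊕ β))
  have := Fintype.ofFinite ((α → β) × (β → α))
  rw [Set.ncard_eq_toFinset_card', Set.ncard_eq_toFinset_card', mul_comm]
  symm
  rw [card_eq_sum_card_fiberwise (f := fun p => functionalGraph (sideSwap p))
    (t := (unicyclicBipartiteGraphs α β).toFinset)
    fun p hp => by simpa using functionalGraph_sideSwap_mem (by simpa using hp)]
  refine sum_const_nat fun G hG => ?_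
  have hG : G ∈ unicyclicBipartiteGraphs α β := Set.mem_toFinset.1 hG
  have hfiber : {p | 2 ≤ (commonCycle (p.2 ∘ p.1)).ncard ∧
      functionalGraph (sideSwap p) = G}.ncard = 2 := by
    rw [← Set.ncard_image_of_injective _ sideSwap_injective,
      image_sideSwap_setOf_functionalGraph_eq hG, ncard_setOf_functionalGraph_eq hG.1 hG.2.2.2]
  refine Eq.trans ?_ hfiber
  rw [← Set.ncard_coe_finset]
  congr 1
  ext p
  simp

end Bipartite

section DistinctProb

variable {n k : ℕ}

/-- The probability that `k` independent uniform samples from an `n`-element set are pairwise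
distinct (the birthday problem). -/
noncomputable def distinctProb (n k : ℕ) : ℝ :=
  n.descFactorial k / (n : ℝ) ^ k

lemma distinctProb_zero : distinctProb n 0 = 1 := by
  simp [distinctProb]

lemma distinctProb_succ (hn : 0 < n) :
    distinctProb n (k + 1) = distinctProb n k * ((n - k : ℕ) / n : ℝ) := by
  rw [distinctProb, distinctProb, Nat.descFactorial_succ, pow_succ]
  push_cast
  field_simp

lemma distinctProb_one (hn : 0 < n) : distinctProb n 1 = 1 := by
  rw [distinctProb_succ hn, distinctProb_zero, one_mul, Nat.sub_zero,
    div_self (Nat.cast_ne_zero.2 hn.ne')]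

lemma distinctProb_eq_zero (hk : n < k) : distinctProb n k = 0 := by
  simp [distinctProb, Nat.descFactorial_eq_zero_iff_lt.2 hk]

lemma distinctProb_nonneg : 0 ≤ distinctProb n k := by
  unfold distinctProb
  positivity

lemma distinctProb_le_exp (hn : 0 < n) :
    distinctProb n k ≤ exp (-((k : ℝ) * (k - 1) / 2 / n)) := by
  induction k with
  | zero => simp [distinctProb_zero]
  | succ k ih =>
    rcases le_or_gt k n with hk | hk
    · have hfactor : ((n - k : ℕ) / n : ℝ) ≤ exp (-(k / n : ℝ)) := by
        rw [Nat.cast_sub hk, sub_div, div_self (by positivity)]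
        exact one_sub_le_exp_neg _
      rw [distinctProb_succ hn]
      refine (mul_le_mul ih hfactor (by positivity) (exp_pos _).le).trans_eq ?_
      rw [← exp_add]
      congr 1
      push_cast
      ring
    · rw [distinctProb_eq_zero (by omega)]
      positivity

lemma exp_neg_sub_two_mul_sq_le {x : ℝ} (hx : x ≤ 1 / 2) :
    exp (-x - 2 * x ^ 2) ≤ 1 - x := by
  have hinv : (1 - x)⁻¹ ≤ 1 + x + 2 * x ^ 2 := by
    rw [inv_le_iff_one_le_mul₀ (by linarith)]
    nlinarith [mul_nonneg (sq_nonneg x) (by linarith : 0 ≤ 1 - 2 * x)]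
  rw [← le_log_iff_exp_le (by linarith)]
  linarith [one_sub_inv_le_log_of_pos (by linarith : 0 < 1 - x)]

lemma exp_le_distinctProb (hk : 2 * k ≤ n) :
    exp (-((k : ℝ) * (k - 1) / 2 / n) - 2 * (k : ℝ) ^ 3 / (n : ℝ) ^ 2) ≤ distinctProb n k := by
  induction k with
  | zero => simp [distinctProb_zero]
  | succ k ih =>
    have hn : 0 < n := by omega
    have hfactor : exp (-(k / n : ℝ) - 2 * (k / n : ℝ) ^ 2) ≤ ((n - k : ℕ) / n : ℝ) := by
      rw [Nat.cast_sub (by omega), sub_div, div_self (by positivity)]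
      refine exp_neg_sub_two_mul_sq_le ?_
      rw [div_le_div_iff₀ (by positivity) two_pos]
      exact_mod_cast (by omega : k * 2 ≤ 1 * n)
    have hcube : 2 * (k : ℝ) ^ 3 / (n : ℝ) ^ 2 + 2 * (k / n : ℝ) ^ 2 ≤
        2 * ((k : ℝ) + 1) ^ 3 / (n : ℝ) ^ 2 := by
      rw [div_pow, mul_div_assoc, mul_div_assoc, ← mul_add, ← add_div]
      gcongr
      nlinarith [sq_nonneg (k : ℝ), (Nat.cast_nonneg k : (0 : ℝ) ≤ k)]
    have hsum : ((k : ℝ) + 1) * (k + 1 - 1) / 2 / n = (k : ℝ) * (k - 1) / 2 / n + k / n := by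
      ring
    rw [distinctProb_succ hn]
    refine le_trans ?_ (mul_le_mul (ih (by omega)) hfactor (exp_pos _).le distinctProb_nonneg)
    rw [← exp_add, exp_le_exp]
    push_cast
    linarith

end DistinctProb

lemma tendsto_distinctProb_mul_exp {ι : Type*} {l : Filter ι} {n k : ι → ℕ}
    (hn : Tendsto n l atTop) (hk : Tendsto (fun x => (k x : ℝ) ^ 3 / (n x : ℝ) ^ 2) l (nhds 0)) :
    Tendsto (fun x => distinctProb (n x) (k x) * exp ((k x : ℝ) * (k x - 1) / 2 / n x)) l
      (nhds 1) := by
  have hlower : Tendsto (fun x => exp (-(2 * ((k x : ℝ) ^ 3 / (n x : ℝ) ^ 2)))) l (nhds 1) := by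
    have hlim := (continuous_exp.tendsto 0).comp (by simpa using (hk.const_mul 2).neg)
    rwa [exp_zero] at hlim
  have hhalf : ∀ᶠ x in l, 2 * k x ≤ n x := by
    filter_upwards [hk.eventually_lt_const (by norm_num : (0 : ℝ) < 1 / 8),
      hn.eventually_ge_atTop 1] with x hcube hpos
    by_contra! hlt
    have hn1 : (1 : ℝ) ≤ n x := by exact_mod_cast hpos
    have hlt' : (n x : ℝ) ≤ 2 * k x := by exact_mod_cast hlt.le
    rw [div_lt_div_iff₀ (by positivity) (by norm_num)] at hcube
    have hpow := pow_le_pow_left₀ (by positivity) hlt' 3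
    nlinarith [mul_nonneg (sq_nonneg (n x : ℝ)) (sub_nonneg.2 hn1)]
  refine tendsto_of_tendsto_of_tendsto_of_le_of_le' hlower tendsto_const_nhds ?_ ?_
  · filter_upwards [hhalf] with x hx
    refine le_of_eq_of_le ?_
      (mul_le_mul_of_nonneg_right (exp_le_distinctProb hx) (exp_pos _).le)
    rw [← exp_add]
    congr 1
    ring
  · filter_upwards [hn.eventually_gt_atTop 0] with x hx
    refine (mul_le_mul_of_nonneg_right (distinctProb_le_exp hx) (exp_pos _).le).trans_eq ?_
    rw [← exp_add, neg_add_cancel, exp_zero]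

section CycleWeight

/-- Up to normalization, the number of functional digraphs on `i + j` vertices, alternating between
the two classes, whose only cycle has length `2 * k`. -/
noncomputable def cycleWeight (i j k : ℕ) : ℝ :=
  distinctProb i k * distinctProb j k * (1 - k / (i + j))

variable {i j k : ℕ}

lemma cycleWeight_zero : cycleWeight i j 0 = 1 := by
  simp [cycleWeight, distinctProb_zero]

lemma cycleWeight_one (hi : 0 < i) (hj : 0 < j) : cycleWeight i j 1 = 1 - 1 / (i + j) := by
  simp [cycleWeight, distinctProb_one hi, distinctProb_one hj]

lemma cycleWeight_eq_zero (hk : i < k) : cycleWeight i j k = 0 := by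
  simp [cycleWeight, distinctProb_eq_zero hk]

lemma cycleWeight_nonneg : 0 ≤ cycleWeight i j k := by
  rcases lt_or_ge i k with hk | hk
  · exact (cycleWeight_eq_zero hk).ge
  · refine mul_nonneg (mul_nonneg distinctProb_nonneg distinctProb_nonneg) (sub_nonneg.2 ?_)
    exact div_le_one_of_le₀ (by exact_mod_cast le_add_right hk) (by positivity)

lemma cycleWeight_le_exp (hi : 0 < i) (hj : 0 < j) :
    cycleWeight i j k ≤ exp (-((k : ℝ) * (k - 1) / 2 * (1 / i + 1 / j))) := by
  calc cycleWeight i j k ≤ distinctProb i k * distinctProb j k :=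
        mul_le_of_le_one_right (mul_nonneg distinctProb_nonneg distinctProb_nonneg)
          (sub_le_self _ (by positivity))
    _ ≤ exp (-((k : ℝ) * (k - 1) / 2 / i)) * exp (-((k : ℝ) * (k - 1) / 2 / j)) :=
        mul_le_mul (distinctProb_le_exp hi) (distinctProb_le_exp hj) distinctProb_nonneg
          (exp_pos _).le
    _ = exp (-((k : ℝ) * (k - 1) / 2 * (1 / i + 1 / j))) := by
        rw [← exp_add]
        congr 1
        ring

end CycleWeight

lemma ncard_setOf_two_le_eq_sum {γ : Type*} [Finite γ] {f : γ → ℕ} {N : ℕ} (hf : ∀ c, f c ≤ N) :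
    {c | 2 ≤ f c}.ncard = ∑ k ∈ Icc 2 N, {c | f c = k}.ncard := by
  classical
  have := Fintype.ofFinite γ
  simp only [Set.ncard_eq_toFinset_card', Set.toFinset_ofPred]
  rw [card_eq_sum_card_fiberwise (f := f) (t := Icc 2 N)
    fun c hc => by simpa [hf c] using hc]
  refine sum_congr rfl fun k hk => ?_
  have hk2 := (mem_Icc.1 hk).1
  rw [filter_filter]
  exact congrArg card (filter_congr fun c _ => by omega)

section ExactCount

variable {α β : Type*} [Fintype α] [Fintype β] [Nonempty α] [Nonempty β]

lemma ncard_setOf_ncard_commonCycle_eq {k : ℕ} [NeZero k] :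
    ({p : (α → β) × (β → α) | (commonCycle (p.2 ∘ p.1)).ncard = k}.ncard : ℝ) =
      (Fintype.card α + Fintype.card β) / (Fintype.card α * Fintype.card β) *
        ((Fintype.card α : ℝ) ^ Fintype.card β * (Fintype.card β : ℝ) ^ Fintype.card α) *
        cycleWeight (Fintype.card α) (Fintype.card β) k := by
  classical
  have ha : (0 : ℝ) < Fintype.card α := by exact_mod_cast Fintype.card_pos
  have hb : (0 : ℝ) < Fintype.card β := by exact_mod_cast Fintype.card_pos
  have hcount := congrArg (Nat.cast : ℕ → ℝ)
    (card_filter_ncard_commonCycle_eq_mul (α := α) (β := β) (k := k))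
  have hsub : ((Fintype.card β).descFactorial k : ℝ) * (Fintype.card β - k : ℕ) =
      (Fintype.card β).descFactorial k * (Fintype.card β - k) := by
    rcases lt_or_ge (Fintype.card β) k with hk | hk
    · simp [Nat.descFactorial_eq_zero_iff_lt.2 hk]
    · rw [Nat.cast_sub hk]
  push_cast [mul_add, mul_assoc, hsub] at hcount
  rw [Set.ncard_eq_toFinset_card', Set.toFinset_ofPred]
  refine mul_right_cancel₀ (pow_pos (mul_pos ha hb) (k + 1)).ne' (hcount.trans ?_)
  rw [cycleWeight, distinctProb, distinctProb]
  field_simp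
  ring

lemma two_mul_ncard_unicyclicBipartiteGraphs_eq_sum :
    2 * ((unicyclicBipartiteGraphs α β).ncard : ℝ) =
      (Fintype.card α + Fintype.card β) / (Fintype.card α * Fintype.card β) *
        ((Fintype.card α : ℝ) ^ Fintype.card β * (Fintype.card β : ℝ) ^ Fintype.card α) *
        ∑ k ∈ Icc 2 (Fintype.card α), cycleWeight (Fintype.card α) (Fintype.card β) k := by
  have hle (p : (α → β) × (β → α)) : (commonCycle (p.2 ∘ p.1)).ncard ≤ Fintype.card α := by
    rw [← Nat.card_eq_fintype_card]
    exact Set.ncard_le_card _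
  rw [← Nat.cast_ofNat, ← Nat.cast_mul, two_mul_ncard_unicyclicBipartiteGraphs,
    ncard_setOf_two_le_eq_sum hle, Nat.cast_sum, mul_sum]
  refine sum_congr rfl fun k hk => ?_
  have : NeZero k := ⟨by have := (mem_Icc.1 hk).1; omega⟩
  exact ncard_setOf_ncard_commonCycle_eq

end ExactCount

lemma integral_Ioi_floor_mul_eq_sum {E : Type*} [NormedAddCommGroup E] [NormedSpace ℝ E]
    [CompleteSpace E] {q : ℕ → E} {N : ℕ} {s : ℝ} (hs : 0 < s) (hq : ∀ k, N ≤ k → q k = 0) :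
    ∫ v in Set.Ioi (0 : ℝ), q ⌊s * v⌋₊ = s⁻¹ • ∑ k ∈ range N, q k := by
  have hscale := MeasureTheory.integral_comp_mul_left_Ioi (fun x : ℝ => q ⌊x⌋₊) 0 hs
  rw [mul_zero] at hscale
  have hsupport : ∫ x in Set.Ioi (0 : ℝ), q ⌊x⌋₊ = ∫ x in Set.Ioc (0 : ℝ) N, q ⌊x⌋₊ := by
    refine MeasureTheory.setIntegral_eq_of_subset_of_forall_sdiff_eq_zero measurableSet_Ioi
      Set.Ioc_subset_Ioi_self fun x hx => hq _ (Nat.le_floor ?_)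
    exact (lt_of_not_ge fun hle => hx.2 ⟨hx.1, hle⟩).le
  have hstep : ∀ k : ℕ, Set.EqOn (fun _ : ℝ => q k) (fun x : ℝ => q ⌊x⌋₊)
      (Set.uIoo (k : ℝ) ((k + 1 : ℕ) : ℝ)) := by
    intro k x hx
    rw [Set.uIoo_of_le (by simp), Nat.cast_succ] at hx
    exact congrArg q (Nat.floor_eq_on_Ico k x (Set.Ioo_subset_Ico_self hx)).symm
  rw [hscale, hsupport, ← intervalIntegral.integral_of_le N.cast_nonneg, ← Nat.cast_zero,
    ← intervalIntegral.sum_integral_adjacent_intervals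
      fun k _ => intervalIntegrable_const.congr_uIoo (hstep k)]
  congr 1
  refine sum_congr rfl fun k _ => ?_
  rw [← intervalIntegral.integral_congr_uIoo (hstep k)]
  simp

lemma integral_Ioi_exp_neg_sq_div_two :
    ∫ v in Set.Ioi (0 : ℝ), exp (-(v ^ 2 / 2)) = √(π / 2) := by
  have hgauss := integral_gaussian_Ioi (1 / 2)
  rw [show π / (1 / 2) = 2 ^ 2 * (π / 2) by ring, sqrt_mul (by positivity),
    sqrt_sq two_pos.le, mul_div_cancel_left₀ _ two_ne_zero] at hgauss
  rw [← hgauss]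
  congr with v
  ring_nf

section Scale

variable {i j : ℕ} {v : ℝ}

/-- The square root of half the harmonic mean of `i` and `j`: the typical size of the `k` that
dominate the sum of `cycleWeight i j k`. -/
noncomputable def cycleScale (i j : ℕ) : ℝ :=
  √(i * j / (i + j))

lemma cycleScale_pos (hi : 0 < i) (hj : 0 < j) : 0 < cycleScale i j := by
  unfold cycleScale
  positivity

lemma inv_cycleScale_sq (hi : 0 < i) (hj : 0 < j) :
    1 / (i : ℝ) + 1 / j = (cycleScale i j ^ 2)⁻¹ := by
  rw [cycleScale, sq_sqrt (by positivity)]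
  field_simp
  ring

lemma cycleScale_comm (i j : ℕ) : cycleScale i j = cycleScale j i := by
  rw [cycleScale, cycleScale, mul_comm, add_comm]

lemma cycleScale_sq_le_left (i j : ℕ) : cycleScale i j ^ 2 ≤ i := by
  rw [cycleScale, sq_sqrt (by positivity), mul_div_assoc]
  exact mul_le_of_le_one_right i.cast_nonneg (div_le_one_of_le₀ (by simp) (by positivity))

lemma tendsto_cycleScale :
    Tendsto (fun p : ℕ × ℕ => cycleScale p.1 p.2) (atTop ×ˢ atTop) atTop := by
  have hmin : Tendsto (fun p : ℕ × ℕ => min p.1 p.2) (atTop ×ˢ atTop) atTop :=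
    tendsto_atTop.2 fun b => by
      filter_upwards [tendsto_fst.eventually_ge_atTop b, tendsto_snd.eventually_ge_atTop b]
        with p using le_min
  have hsqrt : Tendsto (fun p : ℕ × ℕ => √((min p.1 p.2 : ℕ) / 2 : ℝ)) (atTop ×ˢ atTop) atTop :=
    tendsto_sqrt_atTop.comp ((tendsto_natCast_atTop_atTop.comp hmin).atTop_div_const two_pos)
  refine tendsto_atTop_mono' _ ?_ hsqrt
  filter_upwards [tendsto_fst.eventually_gt_atTop 0] with ⟨i, j⟩ hi
  have hi₀ : (0 : ℝ) < i := by exact_mod_cast hi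
  refine sqrt_le_sqrt ?_
  rw [div_le_div_iff₀ two_pos (add_pos_of_pos_of_nonneg hi₀ j.cast_nonneg)]
  rcases le_total i j with hij | hij
  · have : (i : ℝ) ≤ j := by exact_mod_cast hij
    simp only [min_eq_left hij]
    nlinarith
  · have : (j : ℝ) ≤ i := by exact_mod_cast hij
    simp only [min_eq_right hij]
    nlinarith [(j.cast_nonneg : (0 : ℝ) ≤ j)]

lemma cycleWeight_floor_le (hi : 0 < i) (hj : 0 < j) (hs : 1 ≤ cycleScale i j) :
    cycleWeight i j ⌊cycleScale i j * v⌋₊ ≤ exp (3 - v) := by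
  refine (cycleWeight_le_exp hi hj).trans (exp_le_exp.2 ?_)
  rw [inv_cycleScale_sq hi hj]
  set s := cycleScale i j
  set k := (⌊s * v⌋₊ : ℝ)
  have hs₀ : 0 < s := one_pos.trans_le hs
  have hfloor : v - 1 ≤ k / s := by
    rw [le_div_iff₀ hs₀]
    nlinarith [Nat.lt_floor_add_one (s * v)]
  have hdiv : k / s ^ 2 ≤ k / s :=
    div_le_div_of_nonneg_left (Nat.cast_nonneg _) hs₀ (le_self_pow₀ hs two_ne_zero)
  have hexpand : k * (k - 1) / 2 * (s ^ 2)⁻¹ = ((k / s) ^ 2 - k / s ^ 2) / 2 := by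
    field_simp
  rw [hexpand]
  nlinarith [sq_nonneg (k / s - 3 / 2)]

end Scale

section Limit

lemma tendsto_floor_cycleScale_mul_div {v : ℝ} (hv : 0 ≤ v) :
    Tendsto (fun p : ℕ × ℕ => (⌊cycleScale p.1 p.2 * v⌋₊ : ℝ) / cycleScale p.1 p.2)
      (atTop ×ˢ atTop) (nhds v) := by
  simpa only [mul_comm, comp_def] using
    (tendsto_nat_floor_mul_div_atTop hv).comp tendsto_cycleScale

lemma tendsto_distinctProb_floor_mul_exp {v : ℝ} (hv : 0 ≤ v) :
    Tendsto (fun p : ℕ × ℕ => distinctProb p.1 ⌊cycleScale p.1 p.2 * v⌋₊ *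
      exp ((⌊cycleScale p.1 p.2 * v⌋₊ : ℝ) * (⌊cycleScale p.1 p.2 * v⌋₊ - 1) / 2 / p.1))
      (atTop ×ˢ atTop) (nhds 1) := by
  refine tendsto_distinctProb_mul_exp tendsto_fst ?_
  have hlim := ((tendsto_floor_cycleScale_mul_div hv).pow 3).mul
    (tendsto_inv_atTop_zero.comp tendsto_cycleScale)
  rw [mul_zero] at hlim
  refine squeeze_zero' (.of_forall fun p => by positivity) ?_ hlim
  filter_upwards [tendsto_cycleScale.eventually_gt_atTop 0] with p hs
  calc (⌊cycleScale p.1 p.2 * v⌋₊ : ℝ) ^ 3 / (p.1 : ℝ) ^ 2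
      ≤ (⌊cycleScale p.1 p.2 * v⌋₊ : ℝ) ^ 3 / (cycleScale p.1 p.2 ^ 2) ^ 2 := by
        gcongr
        exact cycleScale_sq_le_left _ _
    _ = (⌊cycleScale p.1 p.2 * v⌋₊ / cycleScale p.1 p.2) ^ 3 * (cycleScale p.1 p.2)⁻¹ := by
        field_simp

lemma tendsto_floor_cycleScale_mul_div_add {v : ℝ} (hv : 0 ≤ v) :
    Tendsto (fun p : ℕ × ℕ => (⌊cycleScale p.1 p.2 * v⌋₊ : ℝ) / (p.1 + p.2)) (atTop ×ˢ atTop)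
      (nhds 0) := by
  have hlim := (tendsto_floor_cycleScale_mul_div hv).mul
    (tendsto_inv_atTop_zero.comp tendsto_cycleScale)
  rw [mul_zero] at hlim
  refine squeeze_zero' (.of_forall fun p => by positivity) ?_ hlim
  filter_upwards [tendsto_cycleScale.eventually_gt_atTop 0] with p hs
  rw [comp_apply, ← div_eq_mul_inv, div_div, ← sq]
  have hle : cycleScale p.1 p.2 ^ 2 ≤ p.1 + p.2 :=
    (cycleScale_sq_le_left _ _).trans (le_add_of_nonneg_right (Nat.cast_nonneg _))
  gcongr

lemma tendsto_cycleWeight_floor {v : ℝ} (hv : 0 ≤ v) :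
    Tendsto (fun p : ℕ × ℕ => cycleWeight p.1 p.2 ⌊cycleScale p.1 p.2 * v⌋₊) (atTop ×ˢ atTop)
      (nhds (exp (-(v ^ 2 / 2)))) := by
  have hfloor := tendsto_floor_cycleScale_mul_div hv
  have hinv := tendsto_inv_atTop_zero.comp tendsto_cycleScale
  have hleft := tendsto_distinctProb_floor_mul_exp hv
  have hright := hleft.comp tendsto_prod_swap
  have hexp := (continuous_exp.tendsto _).comp
    (((hfloor.pow 2).sub (hfloor.mul hinv)).div_const 2).neg
  have hcorrection : Tendsto (fun p : ℕ × ℕ =>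
      1 - (⌊cycleScale p.1 p.2 * v⌋₊ : ℝ) / (p.1 + p.2)) (atTop ×ˢ atTop) (nhds 1) := by
    simpa only [sub_zero] using (tendsto_floor_cycleScale_mul_div_add hv).const_sub 1
  have hlim := ((hleft.mul hright).mul hexp).mul hcorrection
  rw [mul_zero, sub_zero, mul_one, mul_one, one_mul] at hlim
  refine hlim.congr' ?_
  filter_upwards [tendsto_fst.eventually_gt_atTop 0, tendsto_snd.eventually_gt_atTop 0]
    with ⟨i, j⟩ hi hj
  have hs := cycleScale_pos hi hj
  have hinv_sq := inv_cycleScale_sq hi hj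
  simp only [comp_apply, Prod.swap_prod_mk, cycleScale_comm j i, cycleWeight]
  generalize cycleScale i j = s at *
  set k := (⌊s * v⌋₊ : ℝ)
  have hexponent : -(((k / s) ^ 2 - k / s * s⁻¹) / 2) =
      -(k * (k - 1) / 2 / i) + -(k * (k - 1) / 2 / j) := by
    rw [← neg_add, div_eq_mul_one_div _ (i : ℝ), div_eq_mul_one_div _ (j : ℝ), ← mul_add, hinv_sq]
    field_simp
  rw [hexponent, exp_add, exp_neg, exp_neg]
  field_simp

lemma tendsto_inv_cycleScale_mul_sum_range :
    Tendsto (fun p : ℕ × ℕ => (cycleScale p.1 p.2)⁻¹ *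
      ∑ k ∈ range (p.1 + 1), cycleWeight p.1 p.2 k) (atTop ×ˢ atTop) (nhds √(π / 2)) := by
  have hbound : MeasureTheory.IntegrableOn (fun v : ℝ => exp (3 - v)) (Set.Ioi 0) := by
    simp only [sub_eq_add_neg, exp_add]
    exact (integrableOn_exp_neg_Ioi 0).const_mul (exp 3)
  rw [← integral_Ioi_exp_neg_sq_div_two]
  refine (MeasureTheory.tendsto_integral_filter_of_dominated_convergence
    (F := fun (p : ℕ × ℕ) v => cycleWeight p.1 p.2 ⌊cycleScale p.1 p.2 * v⌋₊) _ ?_ ?_ hbound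
    ?_).congr' ?_
  · refine .of_forall fun p => Measurable.aestronglyMeasurable ?_
    exact (measurable_from_top (f := cycleWeight p.1 p.2)).comp
      (Nat.measurable_floor.comp (measurable_const_mul _))
  · filter_upwards [tendsto_fst.eventually_gt_atTop 0, tendsto_snd.eventually_gt_atTop 0,
      tendsto_cycleScale.eventually_ge_atTop 1] with p hi hj hs
    refine .of_forall fun v => ?_
    rw [norm_of_nonneg cycleWeight_nonneg]
    exact cycleWeight_floor_le hi hj hs
  · filter_upwards [MeasureTheory.ae_restrict_mem measurableSet_Ioi] with v hv
    exact tendsto_cycleWeight_floor (le_of_lt hv)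
  · filter_upwards [tendsto_cycleScale.eventually_gt_atTop 0] with p hs
    exact integral_Ioi_floor_mul_eq_sum hs fun k hk => cycleWeight_eq_zero hk

lemma tendsto_inv_cycleScale_mul_sum_Icc :
    Tendsto (fun p : ℕ × ℕ => (cycleScale p.1 p.2)⁻¹ *
      ∑ k ∈ Icc 2 p.1, cycleWeight p.1 p.2 k) (atTop ×ˢ atTop) (nhds √(π / 2)) := by
  have hinv := tendsto_inv_atTop_zero.comp tendsto_cycleScale
  have hone : Tendsto (fun p : ℕ × ℕ => (cycleScale p.1 p.2)⁻¹ * cycleWeight p.1 p.2 1)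
      (atTop ×ˢ atTop) (nhds 0) := by
    refine squeeze_zero' ?_ ?_ hinv
    · filter_upwards [tendsto_cycleScale.eventually_gt_atTop 0] with p hs
      exact mul_nonneg (inv_pos.2 hs).le cycleWeight_nonneg
    · filter_upwards [tendsto_fst.eventually_gt_atTop 0, tendsto_snd.eventually_gt_atTop 0]
        with p hi hj
      refine mul_le_of_le_one_right (inv_pos.2 (cycleScale_pos hi hj)).le ?_
      rw [cycleWeight_one hi hj]
      exact sub_le_self _ (by positivity)
  have hlim := (tendsto_inv_cycleScale_mul_sum_range.sub hinv).sub hone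
  rw [sub_zero, sub_zero] at hlim
  refine hlim.congr' ?_
  filter_upwards [tendsto_fst.eventually_gt_atTop 0] with p hi
  rw [range_eq_Ico, sum_eq_sum_Ico_succ_bot (by omega), sum_eq_sum_Ico_succ_bot (by omega),
    cycleWeight_zero, Ico_add_one_right_eq_Icc, comp_apply]
  ring

end Limit

lemma bipGraphCount_add_div_eq {i j : ℕ} (hi : 0 < i) (hj : 0 < j) :
    (bipGraphCount i j (i + j) : ℝ) /
        (√(π / 8) * √(i + j : ℝ) * (i : ℝ) ^ ((j : ℝ) - 1 / 2) * (j : ℝ) ^ ((i : ℝ) - 1 / 2)) =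
      (cycleScale i j)⁻¹ * (∑ k ∈ Icc 2 i, cycleWeight i j k) / √(π / 2) := by
  have : Nonempty (Fin i) := ⟨⟨0, hi⟩⟩
  have : Nonempty (Fin j) := ⟨⟨0, hj⟩⟩
  have hi₀ : (0 : ℝ) < i := by exact_mod_cast hi
  have hj₀ : (0 : ℝ) < j := by exact_mod_cast hj
  have hcount := two_mul_ncard_unicyclicBipartiteGraphs_eq_sum (α := Fin i) (β := Fin j)
  rw [Fintype.card_fin, Fintype.card_fin, ← bipGraphCount_add_eq_ncard, mul_comm,
    ← eq_div_iff two_ne_zero] at hcount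
  have hsqrt_pi : √(π / 8) = √(π / 2) / 2 := by
    rw [show π / 8 = π / 2 / 2 ^ 2 by ring, sqrt_div (by positivity), sqrt_sq two_pos.le]
  have hscale : cycleScale i j = √i * √j / √(i + j) := by
    rw [cycleScale, sqrt_div (by positivity), sqrt_mul hi₀.le]
  rw [hcount, hsqrt_pi, hscale, rpow_sub hi₀, rpow_sub hj₀, rpow_natCast, rpow_natCast,
    ← sqrt_eq_rpow, ← sqrt_eq_rpow]
  field_simp
  rw [sq_sqrt hi₀.le, sq_sqrt hj₀.le, sq_sqrt (add_pos hi₀ hj₀).le]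
  ring

theorem statement_11_general :
    Tendsto (fun p : ℕ × ℕ =>
        (bipGraphCount p.1 p.2 (p.1 + p.2) : ℝ) /
          (√(π / 8) * √(p.1 + p.2 : ℝ) *
            (p.1 : ℝ) ^ ((p.2 : ℝ) - 1 / 2) * (p.2 : ℝ) ^ ((p.1 : ℝ) - 1 / 2)))
      (atTop ×ˢ atTop) (nhds 1) := by
  have hlim := tendsto_inv_cycleScale_mul_sum_Icc.div_const √(π / 2)
  rw [div_self (by positivity)] at hlim
  refine hlim.congr' ?_
  filter_upwards [tendsto_fst.eventually_gt_atTop 0, tendsto_snd.eventually_gt_atTop 0]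
    with p hi hj using (bipGraphCount_add_div_eq hi hj).symm

/-- Theorem (asymptotics of the number of connected unicyclic bipartite graphs):
if `i, j → ∞` and `1/2 ≤ i/j ≤ 2`, then
`C(i,j,0) = (1+o(1)) √(π/8) √(i+j) i^{j−1/2} j^{i−1/2}`. -/
theorem statement_11 (i j : ℕ → ℕ) (hi : ∀ n, 0 < i n) (hj : ∀ n, 0 < j n)
    (hiInf : Tendsto i atTop atTop) (hjInf : Tendsto j atTop atTop)
    (hratio : ∀ n, (1:ℝ)/2 ≤ (i n : ℝ) / (j n : ℝ) ∧ (i n : ℝ) / (j n : ℝ) ≤ 2) :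
    Tendsto (fun n =>
        (bipGraphCount (i n) (j n) (i n + j n) : ℝ) /
          (Real.sqrt (π / 8) * Real.sqrt (i n + j n : ℝ) *
            (i n : ℝ) ^ ((j n : ℝ) - 1/2) * (j n : ℝ) ^ ((i n : ℝ) - 1/2)))
      atTop (nhds 1) := by
  simpa only [comp_def] using statement_11_general.comp (hiInf.prodMk hjInf)
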